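/- For every fixed (β, μ) ∈ ℝ^d × ℝ^N, the infimum over s ∈ ℝ^m of L(β, μ, s) is attained and equals L_δ(β, μ); consequently, inf over (β, μ, s) ∈ ℝ^d × ℝ^N × ℝ^m of L(β, μ, s) equals inf over (β, μ) ∈ ℝ^d × ℝ^N of L_δ(β, μ). -/

import Mathlib

/-- The Huber loss with parameter `δ`. -/
noncomputable def huber (δ a : ℝ) : ℝ :=
  if |a| ≤ δ then a ^ 2 else δ * (2 * |a| - δ)

/-- The joint robust MAP criterion `L(β, μ, s)`. -/
noncomputable def Ljoint (m d N : ℕ) (g : Fin m → Fin N) (y : Fin m → ℝ)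
    (x : Fin m → Fin d → ℝ) (lam α δ : ℝ)
    (β : Fin d → ℝ) (μ : Fin N → ℝ) (s : Fin m → ℝ) : ℝ :=
  (∑ k, (y k - (∑ i, x k i * β i) - μ (g k) - s k) ^ 2) +
    lam * ∑ i, (μ i) ^ 2 + α * ∑ i, (β i) ^ 2 + 2 * δ * ∑ k, |s k|

/-- The Huber MAP criterion `L_δ(β, μ)`. -/
noncomputable def Lhuber (m d N : ℕ) (g : Fin m → Fin N) (y : Fin m → ℝ)
    (x : Fin m → Fin d → ℝ) (lam α δ : ℝ)
    (β : Fin d → ℝ) (μ : Fin N → ℝ) : ℝ :=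
  (∑ k, huber δ (y k - (∑ i, x k i * β i) - μ (g k))) +
    lam * ∑ i, (μ i) ^ 2 + α * ∑ i, (β i) ^ 2

/-!
For fixed `(β, μ)` the joint criterion is, up to a penalty free of `s`, the separable sum
`∑ k, ((r k - s k) ^ 2 + 2 * δ * |s k|)`, where `r` is the vector of residuals. The Huber loss is
the Moreau envelope of `2 * δ * |·|`: the `k`-th summand has minimum `huber δ (r k)`, attained at
the soft thresholding of `r k`. Hence the minimum over `s` is the Huber criterion, and the global
infima agree because an infimum over a product can be taken one factor at a time.
-/

open Set

theorem isLeast_range_sum {ι M : Type*} {α : ι → Type*} [Fintype ι] [AddCommMonoid M] [Preorder M]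
    [AddLeftMono M] {f : ∀ i, α i → M} {c : ι → M} (h : ∀ i, IsLeast (range (f i)) (c i)) :
    IsLeast (range fun s : ∀ i, α i => ∑ i, f i (s i)) (∑ i, c i) := by
  refine ⟨?_, ?_⟩
  · choose s hs using fun i => (h i).1
    exact ⟨s, Finset.sum_congr rfl fun i _ => hs i⟩
  · rintro _ ⟨s, rfl⟩
    exact Finset.sum_le_sum fun i _ => (h i).2 (mem_range_self (s i))

theorem ciInf_prod_eq_of_isGLB {α β γ : Type*} [ConditionallyCompleteLattice γ] [Nonempty β]
    {f : α → β → γ} {c : α → γ} (hc : BddBelow (range c))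
    (h : ∀ a, IsGLB (range (f a)) (c a)) :
    ⨅ p : α × β, f p.1 p.2 = ⨅ a, c a := by
  have hf : BddBelow (range fun p : α × β => f p.1 p.2) := by
    obtain ⟨b, hb⟩ := hc
    refine ⟨b, ?_⟩
    rintro _ ⟨p, rfl⟩
    exact (hb (mem_range_self p.1)).trans ((h p.1).1 (mem_range_self p.2))
  rw [ciInf_prod hf]
  exact iInf_congr fun a => (h a).ciInf_eq

theorem huber_nonneg {δ : ℝ} (hδ : 0 ≤ δ) (a : ℝ) : 0 ≤ huber δ a := by
  unfold huber
  split_ifs with h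
  · positivity
  · exact mul_nonneg hδ (by linarith)

theorem huber_le_sq_sub_add_abs (δ a s : ℝ) : huber δ a ≤ (a - s) ^ 2 + 2 * δ * |s| := by
  have huber_le_abs : huber δ a ≤ (|a| - |s|) ^ 2 + 2 * δ * |s| := by
    unfold huber
    split_ifs with h
    · have : |a| * |s| ≤ δ * |s| := by gcongr
      linarith [sub_sq |a| |s|, sq_abs a, sq_nonneg |s|]
    · -- The difference of the two sides is a perfect square.
      linarith [sq_nonneg (|a| - |s| - δ)]
  have sq_abs_sub_le : (|a| - |s|) ^ 2 ≤ (a - s) ^ 2 :=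
    sq_le_sq.2 (abs_abs_sub_abs_le a s)
  linarith

theorem exists_sq_sub_add_abs_eq_huber (δ a : ℝ) :
    ∃ s : ℝ, (a - s) ^ 2 + 2 * δ * |s| = huber δ a := by
  unfold huber
  split_ifs with h
  · exact ⟨0, by simp⟩
  · rcases le_total 0 a with ha | ha
    · rw [abs_of_nonneg ha] at h ⊢
      refine ⟨a - δ, ?_⟩
      rw [abs_of_nonneg (by linarith)]
      ring
    · rw [abs_of_nonpos ha] at h ⊢
      refine ⟨a + δ, ?_⟩
      rw [abs_of_nonpos (by linarith)]
      ring

theorem isLeast_huber (δ a : ℝ) :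
    IsLeast (range fun s : ℝ => (a - s) ^ 2 + 2 * δ * |s|) (huber δ a) := by
  refine ⟨exists_sq_sub_add_abs_eq_huber δ a, ?_⟩
  rintro _ ⟨s, rfl⟩
  exact huber_le_sq_sub_add_abs δ a s

theorem isLeast_sum_huber_add {ι : Type*} [Fintype ι] (δ : ℝ) (r : ι → ℝ) (c : ℝ) :
    IsLeast (range fun s : ι → ℝ => ∑ k, ((r k - s k) ^ 2 + 2 * δ * |s k|) + c)
      (∑ k, huber δ (r k) + c) := by
  have sum_least := isLeast_range_sum fun k => isLeast_huber δ (r k)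
  simpa only [← range_comp, Function.comp_def] using (add_left_mono (a := c)).map_isLeast sum_least

/-- Here `r θ` is the vector of residuals and `P θ` the penalty of a model with parameter `θ`. -/
theorem joint_inf_eq_huber_general {ι Θ : Type*} [Fintype ι] (δ : ℝ) (r : Θ → ι → ℝ) (P : Θ → ℝ)
    (hbdd : BddBelow (range fun θ => ∑ k, huber δ (r θ k) + P θ)) :
    (∀ θ, IsLeast (range fun s : ι → ℝ => ∑ k, ((r θ k - s k) ^ 2 + 2 * δ * |s k|) + P θ)
        (∑ k, huber δ (r θ k) + P θ)) ∧
      (⨅ p : Θ × (ι → ℝ), ∑ k, ((r p.1 k - p.2 k) ^ 2 + 2 * δ * |p.2 k|) + P p.1) =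
        ⨅ θ, ∑ k, huber δ (r θ k) + P θ :=
  have least θ := isLeast_sum_huber_add δ (r θ) (P θ)
  ⟨least, ciInf_prod_eq_of_isGLB hbdd fun θ => (least θ).isGLB⟩

section Regression

variable {m d N : ℕ} (g : Fin m → Fin N) (y : Fin m → ℝ) (x : Fin m → Fin d → ℝ) (lam α δ : ℝ)

/-- The residuals of the linear model with parameter `θ = (β, μ)`: covariate coefficients and user
effects. -/
def regressionResidual (θ : (Fin d → ℝ) × (Fin N → ℝ)) (k : Fin m) : ℝ :=
  y k - (∑ i, x k i * θ.1 i) - θ.2 (g k)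

/-- The ridge penalty of the parameter `θ = (β, μ)`, with weight `lam` on the user effects and `α`
on the coefficients. -/
def ridgePenalty (θ : (Fin d → ℝ) × (Fin N → ℝ)) : ℝ :=
  lam * ∑ i, θ.2 i ^ 2 + α * ∑ i, θ.1 i ^ 2

theorem Ljoint_eq_sum_add_ridgePenalty (β : Fin d → ℝ) (μ : Fin N → ℝ) (s : Fin m → ℝ) :
    Ljoint m d N g y x lam α δ β μ s =
      ∑ k, ((regressionResidual g y x (β, μ) k - s k) ^ 2 + 2 * δ * |s k|) +
        ridgePenalty lam α (β, μ) := by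
  simp only [Ljoint, regressionResidual, ridgePenalty, Finset.sum_add_distrib, ← Finset.mul_sum]
  ring

theorem Lhuber_eq_sum_add_ridgePenalty (β : Fin d → ℝ) (μ : Fin N → ℝ) :
    Lhuber m d N g y x lam α δ β μ =
      ∑ k, huber δ (regressionResidual g y x (β, μ) k) + ridgePenalty lam α (β, μ) :=
  add_assoc _ _ _

variable {lam α δ}

theorem ridgePenalty_nonneg (hlam : 0 ≤ lam) (hα : 0 ≤ α) (θ : (Fin d → ℝ) × (Fin N → ℝ)) :
    0 ≤ ridgePenalty lam α θ := by
  unfold ridgePenalty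
  positivity

theorem bddBelow_range_sum_huber_add_ridgePenalty (hlam : 0 ≤ lam) (hα : 0 ≤ α) (hδ : 0 ≤ δ) :
    BddBelow (range fun θ =>
      ∑ k, huber δ (regressionResidual g y x θ k) + ridgePenalty lam α θ) := by
  refine ⟨0, ?_⟩
  rintro _ ⟨θ, rfl⟩
  exact add_nonneg (Finset.sum_nonneg fun k _ => huber_nonneg hδ _) (ridgePenalty_nonneg hlam hα θ)

end Regression

/-- Theorem 2: for every fixed `(β, μ)`, the infimum over `s` of `L(β, μ, s)` is
attained and equals `L_δ(β, μ)`; consequently the infima of the two criteria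
coincide. -/
theorem joint_inf_eq_huber (m d N : ℕ) (g : Fin m → Fin N) (y : Fin m → ℝ)
    (x : Fin m → Fin d → ℝ) (lam α δ : ℝ) (hlam : 0 < lam) (hα : 0 < α) (hδ : 0 < δ) :
    (∀ (β : Fin d → ℝ) (μ : Fin N → ℝ),
        IsLeast (Set.range fun s : Fin m → ℝ => Ljoint m d N g y x lam α δ β μ s)
          (Lhuber m d N g y x lam α δ β μ)) ∧
    (⨅ p : (Fin d → ℝ) × (Fin N → ℝ) × (Fin m → ℝ),
        Ljoint m d N g y x lam α δ p.1 p.2.1 p.2.2) =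
      ⨅ q : (Fin d → ℝ) × (Fin N → ℝ), Lhuber m d N g y x lam α δ q.1 q.2 := by
  simp only [Ljoint_eq_sum_add_ridgePenalty, Lhuber_eq_sum_add_ridgePenalty]
  obtain ⟨least, iInf_eq⟩ := joint_inf_eq_huber_general δ (regressionResidual g y x)
    (ridgePenalty lam α)
    (bddBelow_range_sum_huber_add_ridgePenalty g y x hlam.le hα.le hδ.le)
  exact ⟨fun β μ => least (β, μ), ((Equiv.prodAssoc _ _ _).iInf_comp).symm.trans iInf_eq⟩
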